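/- Let c, d, M : ℝ × [0, π] × [0, 2π] → ℝ be smooth functions of (u, θ, ψ) satisfying Condition A and Condition B for every u, and set l := ∂_θ c + 2c cot θ + (∂_ψ d) csc θ and l̄ := ∂_θ d + 2d cot θ − (∂_ψ c) csc θ. Suppose the evolution equation ∂_u M = −[(∂_u c)² + (∂_u d)²] + (1/2) ∂_u (∂_θ l + l cot θ + (∂_ψ l̄) csc θ) holds on ℝ × (0, π) × [0, 2π]. Define, for ν ∈ {0, 1, 2, 3}, m_ν(u) := (1/4π) ∫₀^π ∫₀^{2π} M(u, θ, ψ) n^ν sin θ dψ dθ, where n⁰ = 1, n¹ = sin θ cos ψ, n² = sin θ sin ψ, n³ = cos θ (iterated integrals, integrating in ψ first). Then m_ν is differentiable and for every u, d m_ν/du = −(1/4π) ∫₀^π ∫₀^{2π} [(∂_u c)² + (∂_u d)²] n^ν sin θ dψ dθ. In particular the Bondi mass m₀ is non-increasing in u. -/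

import Mathlib

/-!
The formula says that the divergence term in the evolution equation does not contribute to the
energy-momentum. Since `divTerm` is linear in `(c, d)` with coefficients independent of `u`, its
`u`-derivative is the same operator applied to the news functions `C = ∂_u c`, `D = ∂_u d`
(`deriv_divTerm`), and these inherit Conditions A and B. So it suffices that this operator is
orthogonal to the four functions `n^ν` on the sphere.

This is an integration by parts: for `θ ∈ (0, π)` one has
`divTerm · n^ν · sin θ = ∂_θ F + ∂_ψ G` with explicit `F` and `G`.
* For a weight `g = α + β cos θ`: `F = g (sin θ C_θ + 2 cos θ C) + β sin² θ C` and
  `G = g (2 D_θ + 2 cot θ D - csc θ C_ψ)`.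
* For a weight `sin θ · w(ψ)` with `w'' = -w`:
  `F = w (sin² θ C_θ + sin θ cos θ C) - 2 w' sin θ D` and
  `G = w (2 sin θ D_θ + 2 cos θ D - C_ψ) + w' C`.

By Condition A, `G` takes equal values at `ψ = 0` and `ψ = 2π`. At the poles `F` is either zero or a
multiple of `C`, and then Condition B removes it. The functions `F` are smooth up to the poles, so
no limiting argument is needed (`iterated_integral_eq_zero`, `integral_divX_zonal`,
`integral_divX_dipole`).
-/

open Real MeasureTheory

/-- Partial derivative in the first (θ) variable. -/
noncomputable def pd₁ (f : ℝ → ℝ → ℝ) (θ ψ : ℝ) : ℝ := deriv (fun t => f t ψ) θ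

/-- Partial derivative in the second (ψ) variable. -/
noncomputable def pd₂ (f : ℝ → ℝ → ℝ) (θ ψ : ℝ) : ℝ := deriv (fun t => f θ t) ψ

/-- Partial derivative in the retarded time `u` of a function of `(u, θ, ψ)`. -/
noncomputable def pdu (f : ℝ → ℝ → ℝ → ℝ) (u θ ψ : ℝ) : ℝ := deriv (fun s => f s θ ψ) u

/-- Condition A: `f` together with its derivatives up to second order takes equal
values at `ψ = 0` and `ψ = 2π`. -/
def CondA (f : ℝ → ℝ → ℝ) : Prop :=
  ∀ θ : ℝ, f θ 0 = f θ (2 * π) ∧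
    pd₁ f θ 0 = pd₁ f θ (2 * π) ∧ pd₂ f θ 0 = pd₂ f θ (2 * π) ∧
    pd₁ (pd₁ f) θ 0 = pd₁ (pd₁ f) θ (2 * π) ∧
    pd₂ (pd₁ f) θ 0 = pd₂ (pd₁ f) θ (2 * π) ∧
    pd₂ (pd₂ f) θ 0 = pd₂ (pd₂ f) θ (2 * π)

/-- `l = c_{,2} + 2c cot θ + d_{,3} csc θ`. -/
noncomputable def lfun (c d : ℝ → ℝ → ℝ) (θ ψ : ℝ) : ℝ :=
  pd₁ c θ ψ + 2 * c θ ψ * (cos θ / sin θ) + pd₂ d θ ψ * (sin θ)⁻¹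

/-- `l̄ = d_{,2} + 2d cot θ - c_{,3} csc θ`. -/
noncomputable def lbar (c d : ℝ → ℝ → ℝ) (θ ψ : ℝ) : ℝ :=
  pd₁ d θ ψ + 2 * d θ ψ * (cos θ / sin θ) - pd₂ c θ ψ * (sin θ)⁻¹

/-- The divergence term `l_{,2} + l cot θ + l̄_{,3} csc θ` built from the
`u`-slices of `c` and `d`. -/
noncomputable def divTerm (c d : ℝ → ℝ → ℝ → ℝ) (u θ ψ : ℝ) : ℝ :=
  pd₁ (lfun (c u) (d u)) θ ψ + lfun (c u) (d u) θ ψ * (cos θ / sin θ)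
    + pd₂ (lbar (c u) (d u)) θ ψ * (sin θ)⁻¹

/-- The four unit-sphere functions `n⁰ = 1`, `n¹ = sin θ cos ψ`,
`n² = sin θ sin ψ`, `n³ = cos θ`. -/
noncomputable def nvec (ν : Fin 4) (θ ψ : ℝ) : ℝ :=
  ![1, sin θ * cos ψ, sin θ * sin ψ, cos θ] ν

/-- The Bondi energy-momentum `m_ν(u)` of the null hypersurface `{u = const}`. -/
noncomputable def bondiMom (M : ℝ → ℝ → ℝ → ℝ) (ν : Fin 4) (u : ℝ) : ℝ :=
  (1 / (4 * π)) * ∫ θ in (0:ℝ)..π, ∫ ψ in (0:ℝ)..(2 * π),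
    M u θ ψ * nvec ν θ ψ * sin θ

/-! ### Parametric integrals and the divergence theorem -/

/-- Differentiation under the integral sign for jointly continuous data: by Fubini the parametric
integral is a primitive of the continuous function `s ↦ ∫ t in a..b, f' s t`. -/
lemma hasDerivAt_param {f f' : ℝ → ℝ → ℝ} {a b : ℝ}
    (hf : Continuous (Function.uncurry f)) (hf' : Continuous (Function.uncurry f'))
    (h : ∀ u t, HasDerivAt (fun s => f s t) (f' u t) u) (u : ℝ) :
    HasDerivAt (fun s => ∫ t in a..b, f s t) (∫ t in a..b, f' u t) u := by
  have hc : Continuous fun s => ∫ t in a..b, f' s t :=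
    intervalIntegral.continuous_parametric_intervalIntegral_of_continuous' hf' a b
  have key : ∀ v, (∫ t in a..b, f v t)
      = (∫ s in (0:ℝ)..v, ∫ t in a..b, f' s t) + ∫ t in a..b, f 0 t := by
    intro v
    have hsw := intervalIntegral_intervalIntegral_swap (F := f') (a := 0) (b := v) (c := a) (d := b)
      ((hf'.continuousOn.integrableOn_compact (isCompact_uIcc.prod isCompact_uIcc)).mono_set
        (Set.prod_mono Set.uIoc_subset_uIcc Set.uIoc_subset_uIcc))
    rw [hsw, ← intervalIntegral.integral_add]
    · refine intervalIntegral.integral_congr fun t _ => ?_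
      have := intervalIntegral.integral_eq_sub_of_hasDerivAt (a := 0) (b := v)
        (fun x _ => h x t) (Continuous.intervalIntegrable (by fun_prop) _ _)
      simp only [this]
      ring
    · refine Continuous.intervalIntegrable ?_ _ _
      exact intervalIntegral.continuous_parametric_intervalIntegral_of_continuous'
        (f := fun t s => f' s t) (by fun_prop) _ _
    · exact Continuous.intervalIntegrable (by fun_prop) _ _
  rw [funext key]
  exact (intervalIntegral.integral_hasDerivAt_right (hc.intervalIntegrable _ _)
    hc.aestronglyMeasurable.stronglyMeasurableAtFilter hc.continuousAt).add_const _

/-- A divergence theorem on the sphere in polar coordinates: `K` integrates to zero if, away from the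
poles, `K = ∂_θ F + ∂_ψ G` with `F` regular up to the poles, its `ψ`-mean vanishing there, and `G`
periodic in `ψ`. No regularity of `G` in `θ` is needed, so `G` may blow up at the poles. -/
lemma iterated_integral_eq_zero {K F F' : ℝ → ℝ → ℝ}
    (hK : Continuous (Function.uncurry K))
    (hF : Continuous (Function.uncurry F)) (hF' : Continuous (Function.uncurry F'))
    (h : ∀ θ ψ, HasDerivAt (fun t => F t ψ) (F' θ ψ) θ)
    (h0 : (∫ ψ in (0:ℝ)..(2 * π), F 0 ψ) = 0) (h1 : (∫ ψ in (0:ℝ)..(2 * π), F π ψ) = 0)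
    (hG : ∀ θ ∈ Set.Ioo 0 π, ∃ G : ℝ → ℝ, G 0 = G (2 * π) ∧
      ∀ ψ ∈ Set.Icc 0 (2 * π), HasDerivAt G (K θ ψ - F' θ ψ) ψ) :
    (∫ θ in (0:ℝ)..π, ∫ ψ in (0:ℝ)..(2 * π), K θ ψ) = 0 := by
  have hpi : (0:ℝ) ≤ 2 * π := by positivity
  have hin : ∀ θ ∈ Set.Ioo 0 π, (∫ ψ in (0:ℝ)..(2 * π), K θ ψ)
      = ∫ ψ in (0:ℝ)..(2 * π), F' θ ψ := by
    intro θ hθ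
    obtain ⟨G, hG0, hG'⟩ := hG θ hθ
    have hKi : IntervalIntegrable (K θ) volume 0 (2 * π) :=
      Continuous.intervalIntegrable (by fun_prop) _ _
    have hFi : IntervalIntegrable (F' θ) volume 0 (2 * π) :=
      Continuous.intervalIntegrable (by fun_prop) _ _
    have := intervalIntegral.integral_eq_sub_of_hasDerivAt (a := 0) (b := 2 * π)
      (fun x hx => hG' x (by rwa [Set.uIcc_of_le hpi] at hx)) (hKi.sub hFi)
    rw [intervalIntegral.integral_sub hKi hFi, hG0] at this
    linarith
  rw [intervalIntegral.integral_congr_Ioo_of_le pi_pos.le hin,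
    intervalIntegral.integral_eq_sub_of_hasDerivAt
      (fun θ _ => hasDerivAt_param hF hF' h θ), h0, h1, sub_zero]
  exact (intervalIntegral.continuous_parametric_intervalIntegral_of_continuous'
    hF' _ _).intervalIntegrable _ _

/-! ### Smooth functions of three variables and their partial derivatives -/

/-- Joint smoothness of a curried function of `(u, θ, ψ)`. -/
def Smooth3 (f : ℝ → ℝ → ℝ → ℝ) : Prop :=
  ContDiff ℝ (⊤ : ℕ∞) (fun p : ℝ × ℝ × ℝ => f p.1 p.2.1 p.2.2)

/-- The `θ`-derivative of a function of `(u, θ, ψ)`, as such a function again. -/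
noncomputable def dth (f : ℝ → ℝ → ℝ → ℝ) (u θ ψ : ℝ) : ℝ := pd₁ (f u) θ ψ

/-- The `ψ`-derivative of a function of `(u, θ, ψ)`, as such a function again. -/
noncomputable def dps (f : ℝ → ℝ → ℝ → ℝ) (u θ ψ : ℝ) : ℝ := pd₂ (f u) θ ψ

/-- The directional derivative along `v` of a function of `(u, θ, ψ)`, in curried form. -/
noncomputable def dirD (v : ℝ × ℝ × ℝ) (f : ℝ → ℝ → ℝ → ℝ) (u θ ψ : ℝ) : ℝ :=
  fderiv ℝ (fun p : ℝ × ℝ × ℝ => f p.1 p.2.1 p.2.2) (u, θ, ψ) v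

namespace Smooth3

variable {f : ℝ → ℝ → ℝ → ℝ}

lemma hasFDerivAt (hf : Smooth3 f) (p : ℝ × ℝ × ℝ) :
    HasFDerivAt (fun p : ℝ × ℝ × ℝ => f p.1 p.2.1 p.2.2)
      (fderiv ℝ (fun p : ℝ × ℝ × ℝ => f p.1 p.2.1 p.2.2) p) p :=
  (ContDiff.differentiable hf (by simp) p).hasFDerivAt

lemma hasDerivAt_u' (hf : Smooth3 f) (u θ ψ : ℝ) :
    HasDerivAt (fun s => f s θ ψ) (dirD (1, 0, 0) f u θ ψ) u :=
  HasFDerivAt.comp_hasDerivAt (f := fun s : ℝ => (s, θ, ψ)) u (hf.hasFDerivAt (u, θ, ψ))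
    ((hasDerivAt_id u).prodMk ((hasDerivAt_const u θ).prodMk (hasDerivAt_const u ψ)))

lemma hasDerivAt_th' (hf : Smooth3 f) (u θ ψ : ℝ) :
    HasDerivAt (fun s => f u s ψ) (dirD (0, 1, 0) f u θ ψ) θ :=
  HasFDerivAt.comp_hasDerivAt (f := fun s : ℝ => (u, s, ψ)) θ (hf.hasFDerivAt (u, θ, ψ))
    ((hasDerivAt_const θ u).prodMk ((hasDerivAt_id θ).prodMk (hasDerivAt_const θ ψ)))

lemma hasDerivAt_ps' (hf : Smooth3 f) (u θ ψ : ℝ) :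
    HasDerivAt (fun s => f u θ s) (dirD (0, 0, 1) f u θ ψ) ψ :=
  HasFDerivAt.comp_hasDerivAt (f := fun s : ℝ => (u, θ, s)) ψ (hf.hasFDerivAt (u, θ, ψ))
    ((hasDerivAt_const ψ u).prodMk ((hasDerivAt_const ψ θ).prodMk (hasDerivAt_id ψ)))

lemma pdu_eq (hf : Smooth3 f) : pdu f = dirD (1, 0, 0) f := by
  funext u θ ψ; exact (hf.hasDerivAt_u' u θ ψ).deriv

lemma dth_eq (hf : Smooth3 f) : dth f = dirD (0, 1, 0) f := by
  funext u θ ψ; exact (hf.hasDerivAt_th' u θ ψ).deriv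

lemma dps_eq (hf : Smooth3 f) : dps f = dirD (0, 0, 1) f := by
  funext u θ ψ; exact (hf.hasDerivAt_ps' u θ ψ).deriv

lemma dirD (hf : Smooth3 f) (v : ℝ × ℝ × ℝ) : Smooth3 (dirD v f) := by
  have h : ContDiff ℝ (⊤ : ℕ∞) (fderiv ℝ (fun p : ℝ × ℝ × ℝ => f p.1 p.2.1 p.2.2)) :=
    ContDiff.fderiv_right hf (by simp)
  exact h.clm_apply contDiff_const

/-- Symmetry of second derivatives. -/
lemma dirD_comm (hf : Smooth3 f) (v w : ℝ × ℝ × ℝ) :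
    _root_.dirD v (_root_.dirD w f) = _root_.dirD w (_root_.dirD v f) := by
  funext u θ ψ
  have h : ContDiff ℝ (⊤ : ℕ∞) (fderiv ℝ (fun p : ℝ × ℝ × ℝ => f p.1 p.2.1 p.2.2)) :=
    ContDiff.fderiv_right hf (by simp)
  have hsym : IsSymmSndFDerivAt ℝ (fun p : ℝ × ℝ × ℝ => f p.1 p.2.1 p.2.2) (u, θ, ψ) :=
    (ContDiff.contDiffAt hf).isSymmSndFDerivAt (by
      simp only [minSmoothness_of_isRCLikeNormedField]
      exact WithTop.coe_le_coe.2 (le_top : (2 : ℕ∞) ≤ ⊤))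
  have e : ∀ a b : ℝ × ℝ × ℝ, _root_.dirD a (_root_.dirD b f) u θ ψ
      = fderiv ℝ (fderiv ℝ (fun p : ℝ × ℝ × ℝ => f p.1 p.2.1 p.2.2)) (u, θ, ψ) a b := by
    intro a b
    have := ((h.differentiable (by simp) (u, θ, ψ)).hasFDerivAt.clm_apply
      (hasFDerivAt_const b (u, θ, ψ))).fderiv
    have h2 := congrArg (fun L => L a) this
    simpa [_root_.dirD] using h2
  rw [e, e]
  exact hsym v w

lemma pdu (hf : Smooth3 f) : Smooth3 (pdu f) := hf.pdu_eq ▸ hf.dirD _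
lemma dth (hf : Smooth3 f) : Smooth3 (dth f) := hf.dth_eq ▸ hf.dirD _
lemma dps (hf : Smooth3 f) : Smooth3 (dps f) := hf.dps_eq ▸ hf.dirD _

lemma hasDerivAt_u (hf : Smooth3 f) (u θ ψ : ℝ) :
    HasDerivAt (fun s => f s θ ψ) (_root_.pdu f u θ ψ) u := hf.pdu_eq ▸ hf.hasDerivAt_u' u θ ψ

lemma hasDerivAt_th (hf : Smooth3 f) (u θ ψ : ℝ) :
    HasDerivAt (fun s => f u s ψ) (_root_.dth f u θ ψ) θ := hf.dth_eq ▸ hf.hasDerivAt_th' u θ ψ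

lemma hasDerivAt_ps (hf : Smooth3 f) (u θ ψ : ℝ) :
    HasDerivAt (fun s => f u θ s) (_root_.dps f u θ ψ) ψ := hf.dps_eq ▸ hf.hasDerivAt_ps' u θ ψ

lemma pdu_dth (hf : Smooth3 f) : _root_.pdu (_root_.dth f) = _root_.dth (_root_.pdu f) := by
  rw [hf.dth.pdu_eq, hf.pdu.dth_eq, hf.dth_eq, hf.pdu_eq, hf.dirD_comm]

lemma pdu_dps (hf : Smooth3 f) : _root_.pdu (_root_.dps f) = _root_.dps (_root_.pdu f) := by
  rw [hf.dps.pdu_eq, hf.pdu.dps_eq, hf.dps_eq, hf.pdu_eq, hf.dirD_comm]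

lemma dth_dps (hf : Smooth3 f) : _root_.dth (_root_.dps f) = _root_.dps (_root_.dth f) := by
  rw [hf.dps.dth_eq, hf.dth.dps_eq, hf.dps_eq, hf.dth_eq, hf.dirD_comm]

lemma continuous_slice (hf : Smooth3 f) (u : ℝ) : Continuous (Function.uncurry (f u)) :=
  (ContDiff.continuous hf).comp (by fun_prop : Continuous fun q : ℝ × ℝ => (u, q.1, q.2))

end Smooth3

/-! ### The divergence term -/

/-- The divergence term written out as a second-order differential operator in `c` and `d`, linear
with coefficients depending on `θ` only. Like `divTerm`, it is meaningful where `sin θ ≠ 0`. -/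
noncomputable def divX (c d : ℝ → ℝ → ℝ → ℝ) (u θ ψ : ℝ) : ℝ :=
  dth (dth c) u θ ψ + 3 * (cos θ / sin θ) * dth c u θ ψ - 2 * c u θ ψ
    + 2 * (sin θ)⁻¹ * dps (dth d) u θ ψ + 2 * (cos θ / sin θ) * (sin θ)⁻¹ * dps d u θ ψ
    - (sin θ)⁻¹ ^ 2 * dps (dps c) u θ ψ

lemma divTerm_eq {c d : ℝ → ℝ → ℝ → ℝ} (hc : Smooth3 c) (hd : Smooth3 d) (u θ ψ : ℝ)
    (hs : sin θ ≠ 0) : divTerm c d u θ ψ = divX c d u θ ψ := by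
  have hcot : HasDerivAt (fun t => cos t / sin t)
      ((-sin θ * sin θ - cos θ * cos θ) / sin θ ^ 2) θ :=
    (hasDerivAt_cos θ).div (hasDerivAt_sin θ) hs
  have hcsc : HasDerivAt (fun t => (sin t)⁻¹) (-cos θ / sin θ ^ 2) θ :=
    (hasDerivAt_sin θ).inv hs
  have h1 : pd₁ (lfun (c u) (d u)) θ ψ = _ :=
    (((hc.dth.hasDerivAt_th u θ ψ).add (((hc.hasDerivAt_th u θ ψ).const_mul 2).mul hcot)).add
      ((hd.dps.hasDerivAt_th u θ ψ).mul hcsc)).deriv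
  have h2 : pd₂ (lbar (c u) (d u)) θ ψ = _ :=
    (((hd.dth.hasDerivAt_ps u θ ψ).add
      (((hd.hasDerivAt_ps u θ ψ).const_mul 2).mul_const (cos θ / sin θ))).sub
      ((hc.dps.hasDerivAt_ps u θ ψ).mul_const (sin θ)⁻¹)).deriv
  rw [divTerm, h1, h2, hd.dth_dps]
  simp only [lfun, divX]
  change dth (dth c) u θ ψ + _ + _ + (dth c u θ ψ + _ + dps d u θ ψ * _) * _ + _ = _
  field_simp
  ring

/-- The divergence term commutes with `∂_u`, which turns `c` and `d` into the news functions. -/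
lemma deriv_divTerm {c d : ℝ → ℝ → ℝ → ℝ} (hc : Smooth3 c) (hd : Smooth3 d) (u θ ψ : ℝ)
    (hs : sin θ ≠ 0) :
    deriv (fun s => divTerm c d s θ ψ) u = divX (pdu c) (pdu d) u θ ψ := by
  simp only [fun s => divTerm_eq hc hd s θ ψ hs]
  have := ((((((hc.dth.dth.hasDerivAt_u u θ ψ).add
    ((hc.dth.hasDerivAt_u u θ ψ).const_mul (3 * (cos θ / sin θ)))).sub
    ((hc.hasDerivAt_u u θ ψ).const_mul 2)).add
    ((hd.dth.dps.hasDerivAt_u u θ ψ).const_mul (2 * (sin θ)⁻¹))).add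
    ((hd.dps.hasDerivAt_u u θ ψ).const_mul (2 * (cos θ / sin θ) * (sin θ)⁻¹))).sub
    ((hc.dps.dps.hasDerivAt_u u θ ψ).const_mul ((sin θ)⁻¹ ^ 2))).deriv
  refine this.trans ?_
  rw [hc.dth.pdu_dth, hc.pdu_dth, hd.dth.pdu_dps, hd.pdu_dth, hd.pdu_dps, hc.dps.pdu_dps,
    hc.pdu_dps, divX]

/-- The divergence term is orthogonal to the zonal weights `α + β cos θ`, which cover `n⁰` and
`n³`. The `θ`-flux `F` need not vanish at the poles pointwise: there it is a multiple of `c`, whose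
`ψ`-mean is zero by Condition B. -/
lemma integral_divX_zonal {c d : ℝ → ℝ → ℝ → ℝ} (hc : Smooth3 c) (hd : Smooth3 d) (u : ℝ)
    (hcp : ∀ θ, dps c u θ 0 = dps c u θ (2 * π)) (hd0 : ∀ θ, d u θ 0 = d u θ (2 * π))
    (hdt : ∀ θ, dth d u θ 0 = dth d u θ (2 * π))
    (hB0 : (∫ ψ in (0:ℝ)..(2 * π), c u 0 ψ) = 0) (hBπ : (∫ ψ in (0:ℝ)..(2 * π), c u π ψ) = 0)
    (α β : ℝ) {K : ℝ → ℝ → ℝ} (hK : Continuous (Function.uncurry K))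
    (hKX : ∀ θ ∈ Set.Ioo 0 π, ∀ ψ ∈ Set.Icc 0 (2 * π),
      K θ ψ = divX c d u θ ψ * (α + β * cos θ) * sin θ) :
    (∫ θ in (0:ℝ)..π, ∫ ψ in (0:ℝ)..(2 * π), K θ ψ) = 0 := by
  have c0 := hc.continuous_slice u
  have c1 := hc.dth.continuous_slice u
  have c2 := hc.dth.dth.continuous_slice u
  simp only [Function.uncurry_def] at c0 c1 c2
  refine iterated_integral_eq_zero hK
    (F := fun θ ψ => (α + β * cos θ) * (sin θ * dth c u θ ψ + 2 * (cos θ * c u θ ψ))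
      + β * (sin θ ^ 2 * c u θ ψ))
    (F' := fun θ ψ => (α + β * cos θ) * (sin θ * dth (dth c) u θ ψ + 3 * cos θ * dth c u θ ψ
      - 2 * sin θ * c u θ ψ)) ?_ ?_ ?_ ?_ ?_ ?_
  · simp only [Function.uncurry_def]; fun_prop
  · simp only [Function.uncurry_def]; fun_prop
  · intro θ ψ
    have h1 := hc.hasDerivAt_th u θ ψ
    have h2 := hc.dth.hasDerivAt_th u θ ψ
    have hs := hasDerivAt_sin θ
    have hco := hasDerivAt_cos θ
    refine ((((hco.const_mul β).const_add α).mul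
      ((hs.mul h2).add ((hco.mul h1).const_mul 2))).add
      (((hs.pow 2).mul h1).const_mul β)).congr_deriv ?_
    simp
    ring
  · simp [hB0]
  · simp [hBπ]
  · intro θ hθ
    have hs : sin θ ≠ 0 := (sin_pos_of_mem_Ioo hθ).ne'
    refine ⟨fun ψ => (α + β * cos θ) * (2 * dth d u θ ψ + 2 * (cos θ / sin θ) * d u θ ψ
      - (sin θ)⁻¹ * dps c u θ ψ), by simp only [hcp, hd0, hdt], fun ψ hψ => ?_⟩
    refine (((((hd.dth.hasDerivAt_ps u θ ψ).const_mul 2).add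
      ((hd.hasDerivAt_ps u θ ψ).const_mul (2 * (cos θ / sin θ)))).sub
      ((hc.dps.hasDerivAt_ps u θ ψ).const_mul (sin θ)⁻¹)).const_mul
        (α + β * cos θ)).congr_deriv ?_
    rw [hKX θ hθ ψ hψ, divX]
    field_simp
    ring

/-- The divergence term is orthogonal to `sin θ · w ψ` for a periodic `w` with `w'' = -w`, which
covers `n¹` and `n²`. Here the `θ`-flux `F` has a factor `sin θ` and vanishes at the poles, so
Condition B plays no role. -/
lemma integral_divX_dipole {c d : ℝ → ℝ → ℝ → ℝ} (hc : Smooth3 c) (hd : Smooth3 d) (u : ℝ)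
    (hc0 : ∀ θ, c u θ 0 = c u θ (2 * π))
    (hcp : ∀ θ, dps c u θ 0 = dps c u θ (2 * π)) (hd0 : ∀ θ, d u θ 0 = d u θ (2 * π))
    (hdt : ∀ θ, dth d u θ 0 = dth d u θ (2 * π))
    {w w' : ℝ → ℝ} (hw : ∀ ψ, HasDerivAt w (w' ψ) ψ) (hw' : ∀ ψ, HasDerivAt w' (-w ψ) ψ)
    (hwp : w 0 = w (2 * π)) (hwp' : w' 0 = w' (2 * π))
    {K : ℝ → ℝ → ℝ} (hK : Continuous (Function.uncurry K))
    (hKX : ∀ θ ∈ Set.Ioo 0 π, ∀ ψ ∈ Set.Icc 0 (2 * π),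
      K θ ψ = divX c d u θ ψ * (sin θ * w ψ) * sin θ) :
    (∫ θ in (0:ℝ)..π, ∫ ψ in (0:ℝ)..(2 * π), K θ ψ) = 0 := by
  have c0 := hc.continuous_slice u
  have c1 := hc.dth.continuous_slice u
  have c2 := hc.dth.dth.continuous_slice u
  have d0 := hd.continuous_slice u
  have d1 := hd.dth.continuous_slice u
  have cw : Continuous w := continuous_iff_continuousAt.2 fun ψ => (hw ψ).continuousAt
  have cw' : Continuous w' := continuous_iff_continuousAt.2 fun ψ => (hw' ψ).continuousAt
  simp only [Function.uncurry_def] at c0 c1 c2 d0 d1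
  refine iterated_integral_eq_zero hK
    (F := fun θ ψ => w ψ * (sin θ ^ 2 * dth c u θ ψ + sin θ * cos θ * c u θ ψ)
      - 2 * w' ψ * (sin θ * d u θ ψ))
    (F' := fun θ ψ => w ψ * (sin θ ^ 2 * dth (dth c) u θ ψ + 3 * sin θ * cos θ * dth c u θ ψ
      + (cos θ ^ 2 - sin θ ^ 2) * c u θ ψ)
      - 2 * w' ψ * (sin θ * dth d u θ ψ + cos θ * d u θ ψ)) ?_ ?_ ?_ ?_ ?_ ?_
  · simp only [Function.uncurry_def]; fun_prop
  · simp only [Function.uncurry_def]; fun_prop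
  · intro θ ψ
    have h1 := hc.hasDerivAt_th u θ ψ
    have h2 := hc.dth.hasDerivAt_th u θ ψ
    have h3 := hd.hasDerivAt_th u θ ψ
    have hs := hasDerivAt_sin θ
    have hco := hasDerivAt_cos θ
    refine (((((hs.pow 2).mul h2).add ((hs.mul hco).mul h1)).const_mul (w ψ)).sub
      ((hs.mul h3).const_mul (2 * w' ψ))).congr_deriv ?_
    simp
    ring
  · simp
  · simp
  · intro θ hθ
    have hs : sin θ ≠ 0 := (sin_pos_of_mem_Ioo hθ).ne'
    refine ⟨fun ψ => w ψ * (2 * sin θ * dth d u θ ψ + 2 * cos θ * d u θ ψ - dps c u θ ψ)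
      + w' ψ * c u θ ψ, by simp only [hc0, hcp, hd0, hdt, hwp, hwp'], fun ψ hψ => ?_⟩
    refine (((hw ψ).mul ((((hd.dth.hasDerivAt_ps u θ ψ).const_mul (2 * sin θ)).add
      ((hd.hasDerivAt_ps u θ ψ).const_mul (2 * cos θ))).sub (hc.dps.hasDerivAt_ps u θ ψ))).add
      ((hw' ψ).mul (hc.hasDerivAt_ps u θ ψ))).congr_deriv ?_
    rw [hKX θ hθ ψ hψ, divX]
    field_simp
    simp only [cos_sq', Pi.add_apply, Pi.sub_apply]
    ring

lemma continuous_nvec (ν : Fin 4) : Continuous fun q : ℝ × ℝ => nvec ν q.1 q.2 := by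
  fin_cases ν <;> simp [nvec] <;> fun_prop

/-! ### Passing `∂_u` through the integrals -/

/-- Differentiation of the Bondi energy-momentum under both integral signs. -/
lemma hasDerivAt_bondiMom {M : ℝ → ℝ → ℝ → ℝ} (hM : Smooth3 M) (ν : Fin 4) (u : ℝ) :
    HasDerivAt (bondiMom M ν) ((1 / (4 * π)) * ∫ θ in (0:ℝ)..π, ∫ ψ in (0:ℝ)..(2 * π),
      pdu M u θ ψ * nvec ν θ ψ * sin θ) u := by
  have hn := continuous_nvec ν
  unfold bondiMom
  -- Only the continuity of the weight matters.
  generalize nvec ν = n at hn ⊢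
  have key : ∀ f : ℝ → ℝ → ℝ → ℝ, Smooth3 f →
      Continuous fun q : (ℝ × ℝ) × ℝ => f q.1.1 q.1.2 q.2 * n q.1.2 q.2 * sin q.1.2 := by
    intro f hf
    have h1 : Continuous fun q : (ℝ × ℝ) × ℝ => f q.1.1 q.1.2 q.2 :=
      (ContDiff.continuous hf).comp
        (by fun_prop : Continuous fun q : (ℝ × ℝ) × ℝ => (q.1.1, q.1.2, q.2))
    have h2 : Continuous fun q : (ℝ × ℝ) × ℝ => n q.1.2 q.2 :=
      hn.comp (by fun_prop : Continuous fun q : (ℝ × ℝ) × ℝ => (q.1.2, q.2))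
    exact (h1.mul h2).mul (by fun_prop)
  have inner : ∀ s θ, HasDerivAt
      (fun s => ∫ ψ in (0:ℝ)..(2 * π), M s θ ψ * n θ ψ * sin θ)
      (∫ ψ in (0:ℝ)..(2 * π), pdu M s θ ψ * n θ ψ * sin θ) s := fun s θ =>
    hasDerivAt_param (f := fun s ψ => M s θ ψ * n θ ψ * sin θ)
      (f' := fun s ψ => pdu M s θ ψ * n θ ψ * sin θ)
      ((key M hM).comp (by fun_prop : Continuous fun q : ℝ × ℝ => ((q.1, θ), q.2)))
      ((key _ hM.pdu).comp (by fun_prop : Continuous fun q : ℝ × ℝ => ((q.1, θ), q.2)))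
      (fun v ψ => ((hM.hasDerivAt_u v θ ψ).mul_const (n θ ψ)).mul_const (sin θ)) s
  exact (hasDerivAt_param
    (f := fun s θ => ∫ ψ in (0:ℝ)..(2 * π), M s θ ψ * n θ ψ * sin θ)
    (f' := fun s θ => ∫ ψ in (0:ℝ)..(2 * π), pdu M s θ ψ * n θ ψ * sin θ)
    (intervalIntegral.continuous_parametric_intervalIntegral_of_continuous'
      (f := fun (p : ℝ × ℝ) ψ => M p.1 p.2 ψ * n p.2 ψ * sin p.2) (key M hM) _ _)
    (intervalIntegral.continuous_parametric_intervalIntegral_of_continuous'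
      (f := fun (p : ℝ × ℝ) ψ => pdu M p.1 p.2 ψ * n p.2 ψ * sin p.2) (key _ hM.pdu) _ _)
    inner u).const_mul _

/-- Condition B passes from `c` to its `u`-derivative. -/
lemma integral_pdu_eq_zero {c : ℝ → ℝ → ℝ → ℝ} (hc : Smooth3 c) (θ : ℝ)
    (hB : ∀ u, (∫ ψ in (0:ℝ)..(2 * π), c u θ ψ) = 0) (u : ℝ) :
    (∫ ψ in (0:ℝ)..(2 * π), pdu c u θ ψ) = 0 := by
  have h := hasDerivAt_param (f := fun s ψ => c s θ ψ) (f' := fun s ψ => pdu c s θ ψ)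
    (a := 0) (b := 2 * π)
    ((ContDiff.continuous hc).comp (by fun_prop : Continuous fun q : ℝ × ℝ => (q.1, θ, q.2)))
    ((ContDiff.continuous hc.pdu).comp
      (by fun_prop : Continuous fun q : ℝ × ℝ => (q.1, θ, q.2)))
    (fun s ψ => hc.hasDerivAt_u s θ ψ) u
  simp only [hB] at h
  exact h.unique (hasDerivAt_const u 0)

/-- Bondi mass loss formula: under Conditions A and B and the evolution equation
for the mass aspect, `dm_ν/du = -(1/4π)∫ [(c_{,0})² + (d_{,0})²] n^ν dS`; in
particular the Bondi mass `m₀` is non-increasing. -/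
theorem bondi_mass_loss
    (c d M : ℝ → ℝ → ℝ → ℝ)
    (hc : ContDiff ℝ (⊤ : ℕ∞) (fun p : ℝ × ℝ × ℝ => c p.1 p.2.1 p.2.2))
    (hd : ContDiff ℝ (⊤ : ℕ∞) (fun p : ℝ × ℝ × ℝ => d p.1 p.2.1 p.2.2))
    (hM : ContDiff ℝ (⊤ : ℕ∞) (fun p : ℝ × ℝ × ℝ => M p.1 p.2.1 p.2.2))
    (hA : ∀ u : ℝ, CondA (c u) ∧ CondA (d u) ∧ CondA (M u))
    (hB : ∀ u : ℝ, (∫ ψ in (0:ℝ)..(2 * π), c u 0 ψ) = 0 ∧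
      (∫ ψ in (0:ℝ)..(2 * π), c u π ψ) = 0)
    (hEvol : ∀ u : ℝ, ∀ θ ∈ Set.Ioo 0 π, ∀ ψ ∈ Set.Icc 0 (2 * π),
      pdu M u θ ψ = -((pdu c u θ ψ) ^ 2 + (pdu d u θ ψ) ^ 2)
        + (1 / 2) * deriv (fun s => divTerm c d s θ ψ) u) :
    (∀ ν : Fin 4, ∀ u : ℝ,
      HasDerivAt (bondiMom M ν)
        (-(1 / (4 * π)) * ∫ θ in (0:ℝ)..π, ∫ ψ in (0:ℝ)..(2 * π),
          ((pdu c u θ ψ) ^ 2 + (pdu d u θ ψ) ^ 2) * nvec ν θ ψ * sin θ) u) ∧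
    Antitone (bondiMom M 0) := by
  have hc : Smooth3 c := hc
  have hd : Smooth3 d := hd
  have hM : Smooth3 M := hM
  have main : ∀ (ν : Fin 4) (u : ℝ), HasDerivAt (bondiMom M ν)
        (-(1 / (4 * π)) * ∫ θ in (0:ℝ)..π, ∫ ψ in (0:ℝ)..(2 * π),
          ((pdu c u θ ψ) ^ 2 + (pdu d u θ ψ) ^ 2) * nvec ν θ ψ * sin θ) u := by
    intro ν u
    -- Conditions A and B hold for every `u`, hence also for the news functions.
    have hc0 : ∀ θ, pdu c u θ 0 = pdu c u θ (2 * π) := fun θ =>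
      congrArg (fun f => deriv f u) (funext fun s => ((hA s).1 θ).1)
    have hcp : ∀ θ, dps (pdu c) u θ 0 = dps (pdu c) u θ (2 * π) := fun θ => by
      rw [← hc.pdu_dps]
      exact congrArg (fun f => deriv f u) (funext fun s => ((hA s).1 θ).2.2.1)
    have hd0 : ∀ θ, pdu d u θ 0 = pdu d u θ (2 * π) := fun θ =>
      congrArg (fun f => deriv f u) (funext fun s => ((hA s).2.1 θ).1)
    have hdt : ∀ θ, dth (pdu d) u θ 0 = dth (pdu d) u θ (2 * π) := fun θ =>
      congrArg (fun f => deriv f θ) (funext hd0)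
    have hB0 := integral_pdu_eq_zero hc 0 (fun s => (hB s).1) u
    have hBπ := integral_pdu_eq_zero hc π (fun s => (hB s).2) u
    have cn : Continuous (Function.uncurry fun θ ψ => nvec ν θ ψ) := continuous_nvec ν
    have cM := hM.pdu.continuous_slice u
    have cc := hc.pdu.continuous_slice u
    have cd := hd.pdu.continuous_slice u
    simp only [Function.uncurry_def] at cn cM cc cd
    -- Twice the defect `∂_u M + |news|²` extends the singular expression `∂_u divTerm` continuously
    -- to the poles.
    have hK : Continuous (Function.uncurry fun θ ψ =>
        2 * (pdu M u θ ψ + ((pdu c u θ ψ) ^ 2 + (pdu d u θ ψ) ^ 2)) * nvec ν θ ψ * sin θ) := by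
      simp only [Function.uncurry_def]; fun_prop
    have hE : ∀ θ ∈ Set.Ioo 0 π, ∀ ψ ∈ Set.Icc 0 (2 * π),
        2 * (pdu M u θ ψ + ((pdu c u θ ψ) ^ 2 + (pdu d u θ ψ) ^ 2)) * nvec ν θ ψ * sin θ
          = divX (pdu c) (pdu d) u θ ψ * nvec ν θ ψ * sin θ := by
      intro θ hθ ψ hψ
      rw [hEvol u θ hθ ψ hψ, deriv_divTerm hc hd u θ ψ (sin_pos_of_mem_Ioo hθ).ne']
      ring
    have hzero : (∫ θ in (0:ℝ)..π, ∫ ψ in (0:ℝ)..(2 * π),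
        2 * (pdu M u θ ψ + ((pdu c u θ ψ) ^ 2 + (pdu d u θ ψ) ^ 2)) * nvec ν θ ψ * sin θ) = 0 := by
      match ν with
      | 0 =>
        refine integral_divX_zonal hc.pdu hd.pdu u hcp hd0 hdt hB0 hBπ 1 0 hK
          fun θ hθ ψ hψ => (hE θ hθ ψ hψ).trans ?_
        simp [nvec]
      | 1 =>
        refine integral_divX_dipole hc.pdu hd.pdu u hc0 hcp hd0 hdt (w := cos)
          (w' := fun ψ => -sin ψ) hasDerivAt_cos (fun ψ => (hasDerivAt_sin ψ).neg) (by simp)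
          (by simp) hK fun θ hθ ψ hψ => (hE θ hθ ψ hψ).trans ?_
        simp [nvec]
      | 2 =>
        refine integral_divX_dipole hc.pdu hd.pdu u hc0 hcp hd0 hdt (w := sin)
          (w' := cos) hasDerivAt_sin hasDerivAt_cos (by simp)
          (by simp) hK fun θ hθ ψ hψ => (hE θ hθ ψ hψ).trans ?_
        simp [nvec]
      | 3 =>
        refine integral_divX_zonal hc.pdu hd.pdu u hcp hd0 hdt hB0 hBπ 0 1 hK
          fun θ hθ ψ hψ => (hE θ hθ ψ hψ).trans ?_
        simp [nvec]
    have iterated_add : ∀ f g : ℝ → ℝ → ℝ, Continuous (Function.uncurry f) →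
        Continuous (Function.uncurry g) →
        (∫ θ in (0:ℝ)..π, ∫ ψ in (0:ℝ)..(2 * π), 2 * (f θ ψ + g θ ψ))
          = 2 * ((∫ θ in (0:ℝ)..π, ∫ ψ in (0:ℝ)..(2 * π), f θ ψ)
            + ∫ θ in (0:ℝ)..π, ∫ ψ in (0:ℝ)..(2 * π), g θ ψ) := by
      intro f g hf hg
      have e : ∀ θ, (∫ ψ in (0:ℝ)..(2 * π), (f θ ψ + g θ ψ))
          = (∫ ψ in (0:ℝ)..(2 * π), f θ ψ) + ∫ ψ in (0:ℝ)..(2 * π), g θ ψ := fun θ =>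
        intervalIntegral.integral_add (Continuous.intervalIntegrable (by fun_prop) _ _)
          (Continuous.intervalIntegrable (by fun_prop) _ _)
      simp only [intervalIntegral.integral_const_mul, e]
      rw [intervalIntegral.integral_add]
      · exact (intervalIntegral.continuous_parametric_intervalIntegral_of_continuous'
          hf _ _).intervalIntegrable _ _
      · exact (intervalIntegral.continuous_parametric_intervalIntegral_of_continuous'
          hg _ _).intervalIntegrable _ _
    have hsplit := iterated_add (fun θ ψ => pdu M u θ ψ * nvec ν θ ψ * sin θ)
      (fun θ ψ => ((pdu c u θ ψ) ^ 2 + (pdu d u θ ψ) ^ 2) * nvec ν θ ψ * sin θ)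
      (by simp only [Function.uncurry_def]; fun_prop)
      (by simp only [Function.uncurry_def]; fun_prop)
    simp only [← add_mul, ← mul_assoc, hzero] at hsplit
    refine (hasDerivAt_bondiMom hM ν u).congr_deriv ?_
    linear_combination (-(1 / (4 * π)) / 2) * hsplit
  refine ⟨main, antitone_of_deriv_nonpos (fun u => (main 0 u).differentiableAt) fun u => ?_⟩
  rw [(main 0 u).deriv]
  refine mul_nonpos_of_nonpos_of_nonneg (by simp [pi_pos.le]) ?_
  refine intervalIntegral.integral_nonneg pi_pos.le fun θ hθ => ?_
  refine intervalIntegral.integral_nonneg (by positivity) fun ψ _ => ?_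
  have := sin_nonneg_of_mem_Icc hθ
  simp only [nvec, Matrix.cons_val_zero]
  positivity
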